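/- arXiv:1811.10913 — 4 statements merged into one kernel-verified Lean document; each statement's English description precedes it below -/
import Mathlib

section
/- In the algebra O(S³), the subalgebra B of elements of total degree 0 is generated as a ℂ-algebra by the three elements z := 2 z₁ z₂*, z* := 2 z₁* z₂ and x := z₁* z₁ − z₂* z₂; these satisfy z* z + x² = 1, and the ℂ-algebra homomorphism from ℂ[X, Z, W]/(W Z + X² − 1) to B sending X ↦ x, Z ↦ z, W ↦ z* is an isomorphism. In particular, B is isomorphic to O(S²), the coordinate algebra of the algebraic 2-sphere. -/
/-!
Generation. By uniqueness in its universal property, `O(S³)` is spanned by the monomials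
`z₁ᵃ z₂ᵇ z₁*ᶜ z₂*ᵈ`. Such a monomial has total degree `a + b - c - d`, so `B` is spanned by those
with `a + b = c + d`, which are products of `z₁* z₁ = (1 + x)/2`, `z₂* z₂ = (1 - x)/2`,
`z₁ z₂* = z/2` and `z₁* z₂ = z*/2`.

Injectivity. `Z` is a nonzerodivisor in `O(S²)`, and since `Z W = 1 - X²`, a suitable power of `Z`
multiplies any given element into `ℂ[X, Z]`. So it suffices that `x` and `z` are algebraically
independent in `O(S³)`, and this is seen by evaluating at the rational section
`(z₁, z₂, z₁*, z₂*) = (1, (1 - X)/Z, (1 + X)/2, Z/2)` of the Hopf fibration over `ℂ(X, Z)`.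
-/

open scoped TensorProduct
noncomputable section

/-- The total-degree-`n` component of a `ℤ²`-graded module (total degree of a
`ℤ²`-homogeneous element of degree `(m₁,m₂)` is `m₁+m₂`). -/
def totalDeg {A : Type} [AddCommMonoid A] [Module ℂ A]
    (𝒜 : ℤ × ℤ → Submodule ℂ A) (n : ℤ) : Submodule ℂ A :=
  ⨆ (p : ℤ × ℤ) (_ : p.1 + p.2 = n), 𝒜 p

/-- The defining ideal of `O(S²) = ℂ[X, Z, W]/(W Z + X² − 1)`,
with variables `0 ↦ X`, `1 ↦ Z`, `2 ↦ W`. -/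
def OS2ideal : Ideal (MvPolynomial (Fin 3) ℂ) :=
  Ideal.span {MvPolynomial.X 2 * MvPolynomial.X 1 + MvPolynomial.X 0 ^ 2 - 1}

def OS2 : Type :=
  MvPolynomial (Fin 3) ℂ ⧸ OS2ideal

instance : CommRing OS2 := by unfold OS2; infer_instance
instance : Algebra ℂ OS2 := by unfold OS2; infer_instance

/-- The canonical images of the variables `X`, `Z`, `W` in `O(S²)`. -/
def OS2mk (i : Fin 3) : OS2 :=
  Ideal.Quotient.mk OS2ideal (MvPolynomial.X i)

universe u

section ClearingDenominators

variable {R A : Type*} [CommSemiring R]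

theorem exists_pow_mul_mem_of_mem_adjoin [CommSemiring A] [Algebra R A] {S : Subalgebra R A}
    {z : A} (hz : z ∈ S) {s : Set A} (hs : ∀ a ∈ s, ∃ n : ℕ, z ^ n * a ∈ S) {a : A}
    (ha : a ∈ Algebra.adjoin R s) : ∃ n : ℕ, z ^ n * a ∈ S := by
  induction ha using Algebra.adjoin_induction with
  | mem a ha => exact hs a ha
  | algebraMap r => exact ⟨0, by simp⟩
  | add a b _ _ iha ihb =>
    obtain ⟨m, hm⟩ := iha
    obtain ⟨n, hn⟩ := ihb
    refine ⟨m + n, ?_⟩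
    have e : z ^ (m + n) * (a + b) = z ^ n * (z ^ m * a) + z ^ m * (z ^ n * b) := by ring
    exact e ▸ add_mem (mul_mem (pow_mem hz n) hm) (mul_mem (pow_mem hz m) hn)
  | mul a b _ _ iha ihb =>
    obtain ⟨m, hm⟩ := iha
    obtain ⟨n, hn⟩ := ihb
    refine ⟨m + n, ?_⟩
    have e : z ^ (m + n) * (a * b) = z ^ m * a * (z ^ n * b) := by ring
    exact e ▸ mul_mem hm hn

theorem injective_of_injOn_of_forall_exists_pow_mul_mem [CommRing A] [Algebra R A]
    {C : Type*} [Semiring C] [Algebra R C] {S : Subalgebra R A} {z : A}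
    (hz : z ∈ nonZeroDivisors A) (hS : ∀ a, ∃ n : ℕ, z ^ n * a ∈ S) {f : A →ₐ[R] C}
    (hf : Set.InjOn f S) : Function.Injective f := by
  refine (injective_iff_map_eq_zero f).2 fun a ha => ?_
  obtain ⟨n, hn⟩ := hS a
  have hza : z ^ n * a = 0 := hf hn S.zero_mem (by rw [map_mul, ha, mul_zero, map_zero])
  exact (mul_left_mem_nonZeroDivisors_eq_zero_iff (pow_mem hz n)).1 hza

end ClearingDenominators

theorem injOn_adjoin_of_algebraicIndependent_comp {R A C ι : Type*} [CommRing R] [CommRing A]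
    [CommRing C] [Algebra R A] [Algebra R C] {x : ι → A} {f : A →ₐ[R] C}
    (h : AlgebraicIndependent R (f ∘ x)) :
    Set.InjOn f (Algebra.adjoin R (Set.range x)) := by
  rw [Algebra.adjoin_range_eq_range_aeval]
  rintro _ ⟨p, rfl⟩ _ ⟨q, rfl⟩ hpq
  have e : MvPolynomial.aeval (f ∘ x) = f.comp (MvPolynomial.aeval (R := R) x) := by
    ext; simp
  have hpq' : MvPolynomial.aeval (R := R) (f ∘ x) p = MvPolynomial.aeval (f ∘ x) q := by
    rw [e]; exact hpq
  rw [h hpq']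

theorem mk_mem_nonZeroDivisors_of_prime {A : Type*} [CommRing A] [IsDomain A] {p r : A}
    (hp : Prime p) (hr : ¬ p ∣ r) :
    Ideal.Quotient.mk (Ideal.span {r}) p ∈ nonZeroDivisors (A ⧸ Ideal.span {r}) := by
  refine mem_nonZeroDivisors_iff_right.2 fun a ha => ?_
  obtain ⟨a, rfl⟩ := Ideal.Quotient.mk_surjective a
  rw [← map_mul, Ideal.Quotient.eq_zero_iff_dvd] at ha
  obtain ⟨b, hb⟩ := ha
  obtain ⟨c, rfl⟩ : p ∣ b := (hp.dvd_or_dvd (Dvd.intro_left a hb)).resolve_left hr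
  rw [Ideal.Quotient.eq_zero_iff_dvd]
  exact ⟨c, mul_right_cancel₀ hp.ne_zero (by rw [hb]; ring)⟩

namespace OS2

/-- The canonical projection `ℂ[X, Z, W] → O(S²)`. -/
def proj : MvPolynomial (Fin 3) ℂ →ₐ[ℂ] OS2 :=
  Ideal.Quotient.mkₐ ℂ OS2ideal

/-- The homomorphism out of `O(S²)` sending `X`, `Z`, `W` to three given elements that satisfy the
defining relation. -/
def lift {C : Type*} [CommRing C] [Algebra ℂ C] (v : Fin 3 → C) (h : v 2 * v 1 + v 0 ^ 2 = 1) :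
    OS2 →ₐ[ℂ] C :=
  Ideal.Quotient.liftₐ OS2ideal (MvPolynomial.aeval v) fun a ha => by
    obtain ⟨b, rfl⟩ := Ideal.mem_span_singleton.1 ha
    simp [h]

theorem lift_mk {C : Type*} [CommRing C] [Algebra ℂ C] (v : Fin 3 → C)
    (h : v 2 * v 1 + v 0 ^ 2 = 1) (i : Fin 3) : lift v h (OS2mk i) = v i :=
  MvPolynomial.aeval_X v i

theorem mk_two_mul_mk_one : OS2mk 2 * OS2mk 1 = 1 - OS2mk 0 ^ 2 := by
  have h : proj (MvPolynomial.X 2 * MvPolynomial.X 1 + MvPolynomial.X 0 ^ 2 - 1) = 0 :=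
    Ideal.Quotient.eq_zero_iff_mem.2 (Ideal.mem_span_singleton_self _)
  simp only [map_sub, map_add, map_mul, map_pow, map_one] at h
  exact eq_sub_of_add_eq (sub_eq_zero.1 h)

theorem adjoin_range_mk : Algebra.adjoin ℂ (Set.range OS2mk) = ⊤ := by
  have hrange : Set.range OS2mk = proj '' Set.range MvPolynomial.X := by
    rw [← Set.range_comp]; rfl
  rw [hrange, ← AlgHom.map_adjoin, MvPolynomial.adjoin_range_X, Algebra.map_top]
  exact (AlgHom.range_eq_top proj).2 Ideal.Quotient.mk_surjective

theorem range_eq_adjoin {C : Type*} [Semiring C] [Algebra ℂ C] (f : OS2 →ₐ[ℂ] C) :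
    f.range = Algebra.adjoin ℂ {f (OS2mk 1), f (OS2mk 2), f (OS2mk 0)} := by
  have hrange : Set.range OS2mk = {OS2mk 1, OS2mk 2, OS2mk 0} := by
    ext a
    simp only [Set.mem_range, eq_comm, Fin.exists_fin_succ, Fin.succ_zero_eq_one,
      Fin.succ_one_eq_two, IsEmpty.exists_iff, or_false, Set.mem_insert_iff, Set.mem_singleton_iff]
    tauto
  rw [← Algebra.map_top, ← adjoin_range_mk, AlgHom.map_adjoin, hrange, Set.image_insert_eq,
    Set.image_pair]

theorem mk_one_mem_nonZeroDivisors : OS2mk 1 ∈ nonZeroDivisors OS2 := by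
  refine mk_mem_nonZeroDivisors_of_prime MvPolynomial.X_prime ?_
  rintro ⟨q, hq⟩
  simpa using congrArg (MvPolynomial.eval 0) hq

theorem exists_mk_one_pow_mul_mem_adjoin (a : OS2) :
    ∃ n : ℕ, OS2mk 1 ^ n * a ∈ Algebra.adjoin ℂ (Set.range ![OS2mk 0, OS2mk 1]) := by
  set S := Algebra.adjoin ℂ (Set.range ![OS2mk 0, OS2mk 1])
  have hX : OS2mk 0 ∈ S := Algebra.subset_adjoin ⟨0, rfl⟩
  have hZ : OS2mk 1 ∈ S := Algebra.subset_adjoin ⟨1, rfl⟩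
  have hZW : OS2mk 1 * OS2mk 2 ∈ S := by
    rw [mul_comm, mk_two_mul_mk_one]
    exact sub_mem (one_mem S) (pow_mem hX 2)
  have ha : a ∈ Algebra.adjoin ℂ (Set.range OS2mk) := adjoin_range_mk ▸ Algebra.mem_top
  refine exists_pow_mul_mem_of_mem_adjoin hZ (Set.forall_mem_range.2 fun i => ?_) ha
  fin_cases i
  · exact ⟨0, by simpa using hX⟩
  · exact ⟨0, by simpa using hZ⟩
  · exact ⟨1, by simpa using hZW⟩

theorem injective_of_algebraicIndependent {C : Type*} [CommRing C] [Algebra ℂ C]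
    {f : OS2 →ₐ[ℂ] C} (h : AlgebraicIndependent ℂ ![f (OS2mk 0), f (OS2mk 1)]) :
    Function.Injective f := by
  have hcomp : ![f (OS2mk 0), f (OS2mk 1)] = f ∘ ![OS2mk 0, OS2mk 1] := by
    ext i; fin_cases i <;> rfl
  exact injective_of_injOn_of_forall_exists_pow_mul_mem mk_one_mem_nonZeroDivisors
    exists_mk_one_pow_mul_mem_adjoin (injOn_adjoin_of_algebraicIndependent_comp (hcomp ▸ h))

end OS2

section Grading

variable {R A ι σ : Type*} [CommSemiring R] [CommSemiring A] [Algebra R A] [AddCommMonoid ι]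
  {𝒜 : ι → Submodule R A} {z : σ → A} {d : σ → ι}

theorem aeval_mem_of_isWeightedHomogeneous [SetLike.GradedMonoid 𝒜] (hz : ∀ i, z i ∈ 𝒜 (d i))
    {P : MvPolynomial σ R} {m : ι} (hP : P.IsWeightedHomogeneous d m) :
    MvPolynomial.aeval z P ∈ 𝒜 m := by
  induction hP using MvPolynomial.IsWeightedHomogeneous.induction_on with
  | zero => simp
  | add P Q _ _ hP hQ => simpa using add_mem hP hQ
  | monomial u r hu =>
    rw [MvPolynomial.aeval_monomial, ← Algebra.smul_def, ← hu]
    exact Submodule.smul_mem _ r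
      (SetLike.prod_mem_graded 𝒜 _ _ fun i _ => SetLike.pow_mem_graded _ (hz i))

attribute [local instance] MvPolynomial.weightedGradedAlgebra in
theorem exists_isWeightedHomogeneous_aeval_eq [DecidableEq ι] [GradedAlgebra 𝒜]
    (hz : ∀ i, z i ∈ 𝒜 (d i)) (hsurj : Function.Surjective (MvPolynomial.aeval (R := R) z))
    {m : ι} {a : A} (ha : a ∈ 𝒜 m) :
    ∃ P : MvPolynomial σ R, P.IsWeightedHomogeneous d m ∧ MvPolynomial.aeval z P = a := by
  obtain ⟨P, rfl⟩ := hsurj a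
  let φ : MvPolynomial.weightedHomogeneousSubmodule R d →ₐᵍ[R] 𝒜 :=
    { MvPolynomial.aeval z with map_mem := aeval_mem_of_isWeightedHomogeneous hz }
  let Q := DirectSum.decompose (MvPolynomial.weightedHomogeneousSubmodule R d) P m
  have hQ : φ Q = DirectSum.decompose 𝒜 (φ P) m := map_directSumDecompose _ _ φ
  exact ⟨Q, Q.2, hQ.trans (DirectSum.decompose_of_mem_same 𝒜 ha)⟩

end Grading

section TotalDegree

variable {A : Type}

theorem le_totalDeg [AddCommMonoid A] [Module ℂ A] (𝒜 : ℤ × ℤ → Submodule ℂ A) {p : ℤ × ℤ}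
    {n : ℤ} (hp : p.1 + p.2 = n) : 𝒜 p ≤ totalDeg 𝒜 n :=
  le_iSup₂_of_le p hp le_rfl

instance totalDeg_gradedMonoid [CommSemiring A] [Algebra ℂ A] (𝒜 : ℤ × ℤ → Submodule ℂ A)
    [SetLike.GradedMonoid 𝒜] : SetLike.GradedMonoid (totalDeg 𝒜) where
  one_mem := le_totalDeg 𝒜 (p := 0) (add_zero 0) SetLike.GradedOne.one_mem
  mul_mem m n a b ha hb := by
    suffices h : totalDeg 𝒜 m * totalDeg 𝒜 n ≤ totalDeg 𝒜 (m + n) from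
      h (Submodule.mul_mem_mul ha hb)
    conv_lhs => simp only [totalDeg, Submodule.iSup_mul, Submodule.mul_iSup]
    refine iSup₂_le fun q hq => iSup₂_le fun p hp => Submodule.mul_le.2 fun a ha b hb => ?_
    refine le_totalDeg 𝒜 ?_ (SetLike.mul_mem_graded ha hb)
    rw [Prod.fst_add, Prod.snd_add]
    omega

end TotalDegree

theorem balanced_monomial_mem {M : Type*} [CommMonoid M] (S : Submonoid M)
    {z1 z2 z1s z2s : M} (h11 : z1s * z1 ∈ S) (h22 : z2s * z2 ∈ S) (h12 : z1 * z2s ∈ S)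
    (h21 : z1s * z2 ∈ S) {a b c d : ℕ} (h : a + b = c + d) :
    z1 ^ a * z2 ^ b * z1s ^ c * z2s ^ d ∈ S := by
  rcases le_total a c with hac | hca
  · obtain ⟨k, rfl⟩ := Nat.exists_eq_add_of_le hac
    obtain rfl : b = d + k := by omega
    have e : z1 ^ a * z2 ^ (d + k) * z1s ^ (a + k) * z2s ^ d
        = (z1s * z1) ^ a * (z2s * z2) ^ d * (z1s * z2) ^ k := by
      simp only [mul_pow, pow_add]; ac_rfl
    exact e ▸ mul_mem (mul_mem (pow_mem h11 _) (pow_mem h22 _)) (pow_mem h21 _)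
  · obtain ⟨k, rfl⟩ := Nat.exists_eq_add_of_le hca
    obtain rfl : d = b + k := by omega
    have e : z1 ^ (c + k) * z2 ^ b * z1s ^ c * z2s ^ (b + k)
        = (z1s * z1) ^ c * (z2s * z2) ^ b * (z1 * z2s) ^ k := by
      simp only [mul_pow, pow_add]; ac_rfl
    exact e ▸ mul_mem (mul_mem (pow_mem h11 _) (pow_mem h22 _)) (pow_mem h12 _)

/-- The bidegrees of `z₁, z₂, z₁*, z₂*`. -/
def hopfBidegree : Fin 4 → ℤ × ℤ := ![(1, 0), (0, 1), (-1, 0), (0, -1)]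

theorem weight_hopfBidegree_fst_add_snd (u : Fin 4 →₀ ℕ) :
    (u.weight hopfBidegree).1 + (u.weight hopfBidegree).2 = u 0 + u 1 - (u 2 + u 3) := by
  simp only [hopfBidegree, Finsupp.weight_eq_sum, nsmul_eq_mul, Fin.sum_univ_four,
    Matrix.cons_val_zero, Matrix.cons_val_one, Matrix.cons_val, Prod.fst_add, Prod.fst_mul,
    Prod.fst_natCast, Prod.snd_add, Prod.snd_mul, Prod.snd_natCast]
  ring

theorem aeval_mem_of_isWeightedHomogeneous_hopfBidegree {R A : Type*} [CommSemiring R]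
    [CommSemiring A] [Algebra R A] {S : Subalgebra R A} {z1 z2 z1s z2s : A} (h11 : z1s * z1 ∈ S)
    (h22 : z2s * z2 ∈ S) (h12 : z1 * z2s ∈ S) (h21 : z1s * z2 ∈ S) {p : ℤ × ℤ}
    (hp : p.1 + p.2 = 0) {P : MvPolynomial (Fin 4) R}
    (hP : P.IsWeightedHomogeneous hopfBidegree p) :
    MvPolynomial.aeval ![z1, z2, z1s, z2s] P ∈ S := by
  induction hP using MvPolynomial.IsWeightedHomogeneous.induction_on with
  | zero => simp
  | add P Q _ _ hP hQ =>
    rw [map_add]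
    exact add_mem hP hQ
  | monomial u r hu =>
    have hbalanced : u 0 + u 1 = u 2 + u 3 := by
      have hdeg := weight_hopfBidegree_fst_add_snd u
      rw [hu, hp] at hdeg
      omega
    rw [MvPolynomial.aeval_monomial, ← Algebra.smul_def, Finsupp.prod_fintype _ _ (by simp),
      Fin.prod_univ_four]
    exact S.smul_mem (balanced_monomial_mem S.toSubmonoid h11 h22 h12 h21 hbalanced) r

/-- The predicate that `A`, with the elements `z₁, z₂, z₁*, z₂*`, is the `R`-algebra `O(S³)`: it is
universal among commutative `R`-algebras with four elements satisfying `z₁* z₁ + z₂* z₂ = 1`. -/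
structure IsOS3 (R : Type*) {A : Type u} [CommRing R] [CommRing A] [Algebra R A]
    (z1 z2 z1s z2s : A) : Prop where
  rel : z1s * z1 + z2s * z2 = 1
  existsUnique_algHom (C : Type u) [CommRing C] [Algebra R C] (w1 w2 w1s w2s : C) :
    w1s * w1 + w2s * w2 = 1 →
      ∃! f : A →ₐ[R] C, f z1 = w1 ∧ f z2 = w2 ∧ f z1s = w1s ∧ f z2s = w2s

namespace IsOS3

section UniversalProperty

variable {R : Type*} {A : Type u} [CommRing R] [CommRing A] [Algebra R A] {z1 z2 z1s z2s : A}
  (h : IsOS3 R z1 z2 z1s z2s)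
include h

theorem aeval_surjective :
    Function.Surjective (MvPolynomial.aeval (R := R) ![z1, z2, z1s, z2s]) := by
  set T := (MvPolynomial.aeval (R := R) ![z1, z2, z1s, z2s]).range
  have hT : ∀ i, ![z1, z2, z1s, z2s] i ∈ T := fun i =>
    ⟨MvPolynomial.X i, MvPolynomial.aeval_X _ i⟩
  obtain ⟨g, ⟨g1, g2, g3, g4⟩, -⟩ := h.existsUnique_algHom T ⟨z1, hT 0⟩ ⟨z2, hT 1⟩ ⟨z1s, hT 2⟩
    ⟨z2s, hT 3⟩ (Subtype.ext h.rel)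
  have hg : T.val.comp g = AlgHom.id R A :=
    (h.existsUnique_algHom A z1 z2 z1s z2s h.rel).unique (by simp [g1, g2, g3, g4]) (by simp)
  intro a
  have hga : (g a : A) = a := DFunLike.congr_fun hg a
  exact hga ▸ (g a).2

theorem component_le_adjoin (h2 : IsUnit (2 : R)) {𝒜 : ℤ × ℤ → Submodule R A} [GradedAlgebra 𝒜]
    (hz : ∀ i, ![z1, z2, z1s, z2s] i ∈ 𝒜 (hopfBidegree i)) {p : ℤ × ℤ} (hp : p.1 + p.2 = 0) :
    𝒜 p ≤ (Algebra.adjoin R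
      ({2 * (z1 * z2s), 2 * (z1s * z2), z1s * z1 - z2s * z2} : Set A)).toSubmodule := by
  set S := Algebra.adjoin R ({2 * (z1 * z2s), 2 * (z1s * z2), z1s * z1 - z2s * z2} : Set A)
  have half {a : A} (ha : 2 * a ∈ S) : a ∈ S := by
    rw [← map_ofNat (algebraMap R A) 2, ← Algebra.smul_def] at ha
    exact (Submodule.smul_mem_iff_of_isUnit S.toSubmodule h2).1 ha
  have hx : z1s * z1 - z2s * z2 ∈ S := Algebra.subset_adjoin (by simp)
  have h11 : 2 * (z1s * z1) = 1 + (z1s * z1 - z2s * z2) := by linear_combination h.rel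
  have h22 : 2 * (z2s * z2) = 1 - (z1s * z1 - z2s * z2) := by linear_combination h.rel
  intro a ha
  obtain ⟨P, hP, rfl⟩ := exists_isWeightedHomogeneous_aeval_eq hz h.aeval_surjective ha
  exact aeval_mem_of_isWeightedHomogeneous_hopfBidegree (half (h11 ▸ add_mem (one_mem S) hx))
    (half (h22 ▸ sub_mem (one_mem S) hx)) (half (Algebra.subset_adjoin (by simp)))
    (half (Algebra.subset_adjoin (by simp))) hp hP

theorem quadric_eq_one :
    2 * (z1s * z2) * (2 * (z1 * z2s)) + (z1s * z1 - z2s * z2) ^ 2 = 1 := by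
  linear_combination (z1s * z1 + z2s * z2 + 1) * h.rel

theorem exists_algHom_hopf_section {K : Type u} [Field K] [Algebra R K] (h2 : (2 : K) ≠ 0) (X : K)
    {Z : K} (hZ : Z ≠ 0) :
    ∃ φ : A →ₐ[R] K, φ (z1s * z1 - z2s * z2) = X ∧ φ (2 * (z1 * z2s)) = Z := by
  obtain ⟨φ, ⟨e1, e2, e3, e4⟩, -⟩ := h.existsUnique_algHom K 1 ((1 - X) / Z) ((1 + X) / 2) (Z / 2)
    (by field_simp; ring)
  refine ⟨φ, ?_, ?_⟩
  · simp only [map_sub, map_mul, e1, e2, e3, e4]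
    field_simp
    ring
  · simp only [map_mul, map_ofNat, e1, e4]
    field_simp

end UniversalProperty

theorem algebraicIndependent {R A : Type u} [CommRing R] [IsDomain R] [CommRing A]
    [Algebra R A] {z1 z2 z1s z2s : A} (h : IsOS3 R z1 z2 z1s z2s) (h2 : (2 : R) ≠ 0) :
    AlgebraicIndependent R ![z1s * z1 - z2s * z2, 2 * (z1 * z2s)] := by
  let P := MvPolynomial (Fin 2) R
  let K := FractionRing P
  let ι : P →ₐ[R] K := IsScalarTower.toAlgHom R P K
  have hι : Function.Injective ι := IsFractionRing.injective P K
  have h2K : (2 : K) ≠ 0 := by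
    rw [← map_ofNat (algebraMap R K) 2]
    exact (map_ne_zero_iff _ (FaithfulSMul.algebraMap_injective R K)).2 h2
  have hZ : ι (MvPolynomial.X 1) ≠ 0 := (map_ne_zero_iff ι hι).2 (MvPolynomial.X_ne_zero 1)
  obtain ⟨φ, hx, hz⟩ := h.exists_algHom_hopf_section h2K (ι (MvPolynomial.X 0)) hZ
  refine .of_comp φ ?_
  have hφ : φ ∘ ![z1s * z1 - z2s * z2, 2 * (z1 * z2s)] = ι ∘ MvPolynomial.X := by
    ext i; fin_cases i
    exacts [hx, hz]
  exact hφ ▸ (MvPolynomial.algebraicIndependent_X (Fin 2) R).map' hι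

theorem adjoin_eq_totalDeg_zero {A : Type} [CommRing A] [Algebra ℂ A]
    {𝒜 : ℤ × ℤ → Submodule ℂ A} [GradedAlgebra 𝒜] {z1 z2 z1s z2s : A}
    (h : IsOS3 ℂ z1 z2 z1s z2s) (hz : ∀ i, ![z1, z2, z1s, z2s] i ∈ 𝒜 (hopfBidegree i)) :
    (Algebra.adjoin ℂ
        ({2 * (z1 * z2s), 2 * (z1s * z2), z1s * z1 - z2s * z2} : Set A)).toSubmodule
      = totalDeg 𝒜 0 := by
  let B : Subalgebra ℂ A := SetLike.GradeZero.subalgebra (totalDeg 𝒜)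
  have h11 : z1s * z1 ∈ B := le_totalDeg 𝒜 (by decide) (SetLike.mul_mem_graded (hz 2) (hz 0))
  have h22 : z2s * z2 ∈ B := le_totalDeg 𝒜 (by decide) (SetLike.mul_mem_graded (hz 3) (hz 1))
  have h12 : z1 * z2s ∈ B := le_totalDeg 𝒜 (by decide) (SetLike.mul_mem_graded (hz 0) (hz 3))
  have h21 : z1s * z2 ∈ B := le_totalDeg 𝒜 (by decide) (SetLike.mul_mem_graded (hz 2) (hz 1))
  have hle : Algebra.adjoin ℂ {2 * (z1 * z2s), 2 * (z1s * z2), z1s * z1 - z2s * z2} ≤ B := by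
    refine Algebra.adjoin_le ?_
    rintro _ (rfl | rfl | rfl)
    · exact mul_mem (ofNat_mem B 2) h12
    · exact mul_mem (ofNat_mem B 2) h21
    · exact sub_mem h11 h22
  exact le_antisymm hle (iSup₂_le fun p hp => h.component_le_adjoin two_ne_zero.isUnit hz hp)

theorem injective {A : Type} [CommRing A] [Algebra ℂ A] {z1 z2 z1s z2s : A}
    (h : IsOS3 ℂ z1 z2 z1s z2s) {f : OS2 →ₐ[ℂ] A} (hx : f (OS2mk 0) = z1s * z1 - z2s * z2)
    (hz : f (OS2mk 1) = 2 * (z1 * z2s)) : Function.Injective f :=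
  OS2.injective_of_algebraicIndependent (by rw [hx, hz]; exact h.algebraicIndependent two_ne_zero)

end IsOS3

/-- In `O(S³)` (the commutative `ℂ`-algebra on `z₁, z₂, z₁*, z₂*` with relation
`z₁* z₁ + z₂* z₂ = 1`, `ℤ²`-graded with `deg z₁ = (1,0)`, `deg z₂ = (0,1)`,
`deg z₁* = (−1,0)`, `deg z₂* = (0,−1)`, and pinned down by its universal property),
the subalgebra `B` of total-degree-`0` elements is generated as a `ℂ`-algebra by
`z := 2 z₁ z₂*`, `z* := 2 z₁* z₂` and `x := z₁* z₁ − z₂* z₂`; these satisfy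
`z* z + x² = 1`, and the `ℂ`-algebra homomorphism `ℂ[X,Z,W]/(WZ+X²−1) → B` sending
`X ↦ x`, `Z ↦ z`, `W ↦ z*` is an isomorphism; in particular `B ≅ O(S²)`. -/
theorem classical_coinvariants_are_OS2
    (A : Type) [CommRing A] [Algebra ℂ A]
    (𝒜 : ℤ × ℤ → Submodule ℂ A) [GradedAlgebra 𝒜]
    (z1 z2 z1s z2s : A)
    (hz1 : z1 ∈ 𝒜 (1, 0)) (hz2 : z2 ∈ 𝒜 (0, 1))
    (hz1s : z1s ∈ 𝒜 (-1, 0)) (hz2s : z2s ∈ 𝒜 (0, -1))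
    (hrel : z1s * z1 + z2s * z2 = 1)
    (huniv : ∀ (C : Type) [CommRing C] [Algebra ℂ C] (w1 w2 w1s w2s : C),
      w1s * w1 + w2s * w2 = 1 →
      ∃! f : A →ₐ[ℂ] C, f z1 = w1 ∧ f z2 = w2 ∧ f z1s = w1s ∧ f z2s = w2s) :
    (Algebra.adjoin ℂ
        ({2 * (z1 * z2s), 2 * (z1s * z2), z1s * z1 - z2s * z2} : Set A)).toSubmodule
      = totalDeg 𝒜 0 ∧
    (2 * (z1s * z2)) * (2 * (z1 * z2s)) + (z1s * z1 - z2s * z2) ^ 2 = 1 ∧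
    (∃ f : OS2 →ₐ[ℂ] A,
      f (OS2mk 0) = z1s * z1 - z2s * z2 ∧ f (OS2mk 1) = 2 * (z1 * z2s) ∧
        f (OS2mk 2) = 2 * (z1s * z2)) ∧
    (∀ f : OS2 →ₐ[ℂ] A,
      (f (OS2mk 0) = z1s * z1 - z2s * z2 ∧ f (OS2mk 1) = 2 * (z1 * z2s) ∧
        f (OS2mk 2) = 2 * (z1s * z2)) →
      Function.Injective f ∧ (f.range).toSubmodule = totalDeg 𝒜 0) ∧
    Nonempty (OS2 ≃ₐ[ℂ] ↥(Algebra.adjoin ℂ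
        ({2 * (z1 * z2s), 2 * (z1s * z2), z1s * z1 - z2s * z2} : Set A))) := by
  have h : IsOS3 ℂ z1 z2 z1s z2s := ⟨hrel, huniv⟩
  have hz : ∀ i, ![z1, z2, z1s, z2s] i ∈ 𝒜 (hopfBidegree i) := by
    intro i
    fin_cases i
    exacts [hz1, hz2, hz1s, hz2s]
  have hB := h.adjoin_eq_totalDeg_zero hz
  let φ : OS2 →ₐ[ℂ] A := OS2.lift ![_, _, _] h.quadric_eq_one
  have hφ := OS2.lift_mk ![_, _, _] h.quadric_eq_one
  refine ⟨hB, h.quadric_eq_one, ⟨φ, hφ 0, hφ 1, hφ 2⟩, fun f hf => ?_, ?_⟩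
  · obtain ⟨hx, hz, hw⟩ := hf
    exact ⟨h.injective hx hz, by rw [OS2.range_eq_adjoin, hx, hz, hw, hB]⟩
  · have hrange := OS2.range_eq_adjoin φ
    rw [hφ 0, hφ 1, hφ 2] at hrange
    exact ⟨(AlgEquiv.ofInjective φ (h.injective (hφ 0) (hφ 1))).trans
      (Subalgebra.equivOfEq _ _ hrange)⟩
end
end

section
/- For every θ ∈ ℝ, the algebra A_θ = (O(S³), ⋆_θ), graded by total degree, is strongly ℤ-graded: for every m, n ∈ ℤ the ℂ-span of the products {a ⋆_θ b : a of total degree m, b of total degree n} equals the total-degree-(m+n) component; in particular, for every n ∈ ℤ there exist finitely many homogeneous elements a₁,…,a_k of total degree −n and b₁,…,b_k of total degree n with Σᵢ aᵢ ⋆_θ bᵢ = 1. (This expresses that the deformed Hopf fibration (A_θ, δ) is a principal O(U(1))-comodule algebra.) -/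
/-!
On bihomogeneous elements `⋆_θ` is the product rescaled by a nonzero phase, so for sums of
bihomogeneous components the span of the products `a ⋆_θ b` is the span of the products `a b`. Hence
the strong grading only has to be shown for `θ = 0`, where it amounts to `1 ∈ A⁽⁻ⁿ⁾ A⁽ⁿ⁾` for all
`n`. The degrees `n` with this property are closed under addition, and the sphere relation
`z₁* z₁ + z₂* z₂ = 1`, read in both orders by commutativity, puts `1` and `-1` among them.
-/

open scoped TensorProduct
noncomputable section

/-- The phase factor `e^{πiθ(m₁m₂' − m₂m₁')}`. -/
def phase (θ : ℝ) (p q : ℤ × ℤ) : ℂ :=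
  Complex.exp (Complex.I * ((Real.pi * θ : ℝ) : ℂ) * ((p.1 * q.2 - p.2 * q.1 : ℤ) : ℂ))

section BilinearSpan

variable {R M N P : Type*} [CommSemiring R] [AddCommMonoid M] [AddCommMonoid N] [AddCommMonoid P]
  [Module R M] [Module R N] [Module R P]

theorem span_apply₂_eq_map₂ (f : M →ₗ[R] N →ₗ[R] P) (p : Submodule R M)
    (q : Submodule R N) :
    Submodule.span R {x : P | ∃ a ∈ p, ∃ b ∈ q, x = f a b} = Submodule.map₂ f p q := by
  simp only [Submodule.map₂_eq_span_image2, Set.image2, SetLike.mem_coe, eq_comm]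

theorem exists_sum_apply₂_eq_of_mem_map₂ {f : M →ₗ[R] N →ₗ[R] P} {p : Submodule R M}
    {q : Submodule R N} {x : P} (hx : x ∈ Submodule.map₂ f p q) :
    ∃ (k : ℕ) (a : Fin k → M) (b : Fin k → N),
      (∀ i, a i ∈ p) ∧ (∀ i, b i ∈ q) ∧ ∑ i, f (a i) (b i) = x := by
  rw [← span_apply₂_eq_map₂, Submodule.mem_span_set'] at hx
  obtain ⟨k, c, y, hsum⟩ := hx
  choose a ha b hb hy using fun i => (y i).2
  refine ⟨k, fun i => c i • a i, b, fun i => p.smul_mem _ (ha i), hb, ?_⟩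
  simpa only [map_smul, LinearMap.smul_apply, ← hy] using hsum

end BilinearSpan

section StronglyGraded

variable {κ R A : Type*} [CommSemiring R] [Semiring A] [Algebra R A]
  {ℬ : κ → Submodule R A}

theorem mul_eq_add_of_one_mem_neg_mul [AddGroup κ] [SetLike.GradedMonoid ℬ] (i : κ) {j : κ}
    (hj : 1 ∈ ℬ (-j) * ℬ j) : ℬ i * ℬ j = ℬ (i + j) := by
  refine le_antisymm (Submodule.mul_le.2 fun a ha b hb => SetLike.mul_mem_graded ha hb) ?_
  have hle : ℬ (i + j) * ℬ (-j) ≤ ℬ i := Submodule.mul_le.2 fun a ha b hb => by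
    simpa only [add_neg_cancel_right] using SetLike.mul_mem_graded ha hb
  calc ℬ (i + j) = ℬ (i + j) * 1 := (mul_one _).symm
    _ ≤ ℬ (i + j) * (ℬ (-j) * ℬ j) := mul_le_mul_right (Submodule.one_le.2 hj) _
    _ = ℬ (i + j) * ℬ (-j) * ℬ j := (mul_assoc _ _ _).symm
    _ ≤ ℬ i * ℬ j := mul_le_mul_left hle _

theorem one_mem_neg_add_mul_add [AddGroup κ] [SetLike.GradedMonoid ℬ] {i j : κ}
    (hi : 1 ∈ ℬ (-i) * ℬ i) (hj : 1 ∈ ℬ (-j) * ℬ j) : 1 ∈ ℬ (-(i + j)) * ℬ (i + j) := by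
  have hle : ℬ (-j) * ℬ (-i) ≤ ℬ (-(i + j)) := Submodule.mul_le.2 fun a ha b hb => by
    simpa only [neg_add_rev] using SetLike.mul_mem_graded ha hb
  refine Submodule.one_le.1 ?_
  calc 1 ≤ ℬ (-j) * ℬ j := Submodule.one_le.2 hj
    _ = ℬ (-j) * 1 * ℬ j := by rw [mul_one]
    _ ≤ ℬ (-j) * (ℬ (-i) * ℬ i) * ℬ j :=
      mul_le_mul_left (mul_le_mul_right (Submodule.one_le.2 hi) _) _
    _ = ℬ (-j) * ℬ (-i) * (ℬ i * ℬ j) := by simp only [mul_assoc]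
    _ ≤ ℬ (-(i + j)) * ℬ (i + j) := by
      rw [mul_eq_add_of_one_mem_neg_mul i hj]
      exact mul_le_mul_left hle _

theorem one_mem_neg_mul_of_one_mem {ℬ : ℤ → Submodule R A} [SetLike.GradedMonoid ℬ]
    (h₁ : 1 ∈ ℬ (-1) * ℬ 1) (h₂ : 1 ∈ ℬ 1 * ℬ (-1)) (n : ℤ) : 1 ∈ ℬ (-n) * ℬ n := by
  induction n with
  | zero =>
    have h₀ : (1 : A) ∈ ℬ 0 := SetLike.one_mem_graded ℬ
    simpa only [neg_zero, mul_one] using Submodule.mul_mem_mul h₀ h₀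
  | succ n ih => exact one_mem_neg_add_mul_add ih h₁
  | pred n ih => exact one_mem_neg_add_mul_add ih (by rwa [neg_neg])

end StronglyGraded

section Coarsening

variable {ι κ R A : Type*} [CommSemiring R] [Semiring A] [Algebra R A]

/-- The coarsening of an `ι`-grading along a map `φ : ι → κ` of degrees: the component of degree
`k` is the sum of all components whose degree is sent to `k`. The total-degree grading of a
`ℤ²`-graded module is the case `φ (m₁, m₂) = m₁ + m₂`. -/
def coarsenedGrading {M : Type*} [AddCommMonoid M] [Module R M] (φ : ι → κ)
    (𝒜 : ι → Submodule R M) (k : κ) : Submodule R M :=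
  ⨆ (i : ι) (_ : φ i = k), 𝒜 i

theorem mem_coarsenedGrading {M : Type*} [AddCommMonoid M] [Module R M] {φ : ι → κ}
    {𝒜 : ι → Submodule R M} {i : ι} {k : κ} {a : M} (ha : a ∈ 𝒜 i) (hi : φ i = k) :
    a ∈ coarsenedGrading φ 𝒜 k :=
  Submodule.mem_iSup_of_mem i (Submodule.mem_iSup_of_mem hi ha)

theorem coarsenedGrading_mul_le [AddMonoid ι] [AddMonoid κ] (φ : ι →+ κ)
    (𝒜 : ι → Submodule R A) [SetLike.GradedMonoid 𝒜] (k l : κ) :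
    coarsenedGrading φ 𝒜 k * coarsenedGrading φ 𝒜 l ≤ coarsenedGrading φ 𝒜 (k + l) := by
  rw [coarsenedGrading, coarsenedGrading]
  simp only [Submodule.iSup_mul, Submodule.mul_iSup, iSup_le_iff]
  rintro j rfl i rfl
  exact Submodule.mul_le.2 fun a ha b hb =>
    mem_coarsenedGrading (SetLike.mul_mem_graded ha hb) (map_add φ i j)

instance [AddMonoid ι] [AddMonoid κ] (φ : ι →+ κ) (𝒜 : ι → Submodule R A)
    [SetLike.GradedMonoid 𝒜] : SetLike.GradedMonoid (coarsenedGrading φ 𝒜) where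
  one_mem := mem_coarsenedGrading (SetLike.one_mem_graded 𝒜) (map_zero φ)
  mul_mem _ _ _ _ ha hb := coarsenedGrading_mul_le φ 𝒜 _ _ (Submodule.mul_mem_mul ha hb)

theorem map₂_eq_mul_of_isUnit_smul {P Q : Submodule R A} {f : A →ₗ[R] A →ₗ[R] A} {c : R}
    (hc : IsUnit c) (hf : ∀ a ∈ P, ∀ b ∈ Q, f a b = c • (a * b)) :
    Submodule.map₂ f P Q = P * Q := by
  refine le_antisymm (Submodule.map₂_le.2 fun a ha b hb => ?_)
    (Submodule.mul_le.2 fun a ha b hb => ?_)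
  · rw [hf a ha b hb]
    exact Submodule.smul_mem _ _ (Submodule.mul_mem_mul ha hb)
  · rw [← Submodule.smul_mem_iff_of_isUnit _ hc, ← hf a ha b hb]
    exact Submodule.apply_mem_map₂ f ha hb

theorem map₂_coarsenedGrading_eq_mul (φ : ι → κ) {𝒜 : ι → Submodule R A} {c : ι → ι → R}
    (hc : ∀ i j, IsUnit (c i j)) {f : A →ₗ[R] A →ₗ[R] A}
    (hf : ∀ i j, ∀ a ∈ 𝒜 i, ∀ b ∈ 𝒜 j, f a b = c i j • (a * b)) (k l : κ) :
    Submodule.map₂ f (coarsenedGrading φ 𝒜 k) (coarsenedGrading φ 𝒜 l) =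
      coarsenedGrading φ 𝒜 k * coarsenedGrading φ 𝒜 l := by
  simp only [coarsenedGrading, Submodule.map₂_iSup_left, Submodule.map₂_iSup_right,
    Submodule.iSup_mul, Submodule.mul_iSup, map₂_eq_mul_of_isUnit_smul (hc _ _) (hf _ _)]

end Coarsening

theorem deformed_hopf_fibration_strongly_graded_general
    {ι R A : Type*} [AddMonoid ι] [CommSemiring R] [Semiring A] [Algebra R A]
    (φ : ι →+ ℤ) (𝒜 : ι → Submodule R A) [SetLike.GradedMonoid 𝒜]
    (h₁ : 1 ∈ coarsenedGrading φ 𝒜 (-1) * coarsenedGrading φ 𝒜 1)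
    (h₂ : 1 ∈ coarsenedGrading φ 𝒜 1 * coarsenedGrading φ 𝒜 (-1))
    {c : ι → ι → R} (hc : ∀ p q, IsUnit (c p q))
    (stp : A →ₗ[R] A →ₗ[R] A)
    (hstp : ∀ p q, ∀ a ∈ 𝒜 p, ∀ a' ∈ 𝒜 q, stp a a' = c p q • (a * a')) :
    (∀ m n : ℤ,
      Submodule.span R
          {x : A | ∃ a ∈ coarsenedGrading φ 𝒜 m, ∃ b ∈ coarsenedGrading φ 𝒜 n, x = stp a b}
        = coarsenedGrading φ 𝒜 (m + n)) ∧
    (∀ n : ℤ, ∃ (k : ℕ) (a b : Fin k → A),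
      (∀ i, a i ∈ coarsenedGrading φ 𝒜 (-n)) ∧ (∀ i, b i ∈ coarsenedGrading φ 𝒜 n) ∧
      ∑ i, stp (a i) (b i) = 1) := by
  have h_one := one_mem_neg_mul_of_one_mem h₁ h₂
  have h_map₂ := map₂_coarsenedGrading_eq_mul φ hc hstp
  refine ⟨fun m n => ?_, fun n => exists_sum_apply₂_eq_of_mem_map₂ ?_⟩
  · rw [span_apply₂_eq_map₂, h_map₂, mul_eq_add_of_one_mem_neg_mul m (h_one n)]
  · rw [h_map₂]
    exact h_one n

/-- The total degree `(m₁, m₂) ↦ m₁ + m₂` as a homomorphism; `totalDeg` is by definition the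
coarsening along it. -/
abbrev totalDegHom : ℤ × ℤ →+ ℤ := AddMonoidHom.fst ℤ ℤ + AddMonoidHom.snd ℤ ℤ

theorem one_mem_neg_one_mul_one_of_sphere_relation {R A : Type*} [CommSemiring R] [Semiring A]
    [Algebra R A] {𝒜 : ℤ × ℤ → Submodule R A} {z1 z2 z1s z2s : A}
    (hz1 : z1 ∈ 𝒜 (1, 0)) (hz2 : z2 ∈ 𝒜 (0, 1))
    (hz1s : z1s ∈ 𝒜 (-1, 0)) (hz2s : z2s ∈ 𝒜 (0, -1))
    (hrel : z1s * z1 + z2s * z2 = 1) :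
    1 ∈ coarsenedGrading totalDegHom 𝒜 (-1) * coarsenedGrading totalDegHom 𝒜 1 := by
  rw [← hrel]
  exact add_mem
    (Submodule.mul_mem_mul (mem_coarsenedGrading hz1s rfl) (mem_coarsenedGrading hz1 rfl))
    (Submodule.mul_mem_mul (mem_coarsenedGrading hz2s rfl) (mem_coarsenedGrading hz2 rfl))

/-- for every `θ ∈ ℝ`, the algebra `A_θ = (O(S³), ⋆_θ)`, graded by total
degree, is strongly `ℤ`-graded: for every `m, n ∈ ℤ` the `ℂ`-span of
`{a ⋆_θ b : a ∈ A⁽ᵐ⁾, b ∈ A⁽ⁿ⁾}` equals `A⁽ᵐ⁺ⁿ⁾`; in particular for every `n` there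
are finitely many homogeneous `aᵢ` of total degree `−n` and `bᵢ` of total degree `n`
with `Σᵢ aᵢ ⋆_θ bᵢ = 1`. -/
theorem deformed_hopf_fibration_strongly_graded
    (A : Type) [CommRing A] [Algebra ℂ A]
    (𝒜 : ℤ × ℤ → Submodule ℂ A) [GradedAlgebra 𝒜]
    (z1 z2 z1s z2s : A)
    (hz1 : z1 ∈ 𝒜 (1, 0)) (hz2 : z2 ∈ 𝒜 (0, 1))
    (hz1s : z1s ∈ 𝒜 (-1, 0)) (hz2s : z2s ∈ 𝒜 (0, -1))
    (hrel : z1s * z1 + z2s * z2 = 1)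
    (huniv : ∀ (C : Type) [CommRing C] [Algebra ℂ C] (w1 w2 w1s w2s : C),
      w1s * w1 + w2s * w2 = 1 →
      ∃! f : A →ₐ[ℂ] C, f z1 = w1 ∧ f z2 = w2 ∧ f z1s = w1s ∧ f z2s = w2s)
    (θ : ℝ)
    (stp : A →ₗ[ℂ] A →ₗ[ℂ] A)
    (hstp : ∀ (p q : ℤ × ℤ), ∀ a ∈ 𝒜 p, ∀ a' ∈ 𝒜 q, stp a a' = phase θ p q • (a * a')) :
    (∀ m n : ℤ,
      Submodule.span ℂ
          {x : A | ∃ a ∈ totalDeg 𝒜 m, ∃ b ∈ totalDeg 𝒜 n, x = stp a b}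
        = totalDeg 𝒜 (m + n)) ∧
    (∀ n : ℤ, ∃ (k : ℕ) (a b : Fin k → A),
      (∀ i, a i ∈ totalDeg 𝒜 (-n)) ∧ (∀ i, b i ∈ totalDeg 𝒜 n) ∧
      ∑ i, stp (a i) (b i) = 1) := by
  have h := one_mem_neg_one_mul_one_of_sphere_relation hz1 hz2 hz1s hz2s hrel
  exact deformed_hopf_fibration_strongly_graded_general totalDegHom 𝒜 h
    (by rwa [mul_comm]) (fun _ _ => (Complex.exp_ne_zero _).isUnit) stp hstp
end
end

section
/- For every ℤ-graded ℂ-vector space V, the linear map L_V : E_A(V) → E_{A_θ}(V), defined on a⊗v with a ℤ²-homogeneous of degree (m+n, −m) and v ∈ Vⁿ by L_V(a⊗v) := e^{πiθmn} a⊗v, is an isomorphism of left B-modules: L_V(b·ξ) = b·L_V(ξ) for all b ∈ B and ξ ∈ E_A(V), where the target carries the ⋆_θ-action. Moreover, L is natural in V: for every grading-preserving linear map f : V → W one has L_W ∘ (id⊗f) = (id⊗f) ∘ L_V. (Hence the associated module functors of the classical and deformed Hopf fibrations are naturally isomorphic.) -/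
/-!
`L_V` acts on each generator `a ⊗ v` of `E_A(V)` by a nonzero scalar, and a linear map restricts
to a bijection of the span of any set of eigenvectors with nonzero eigenvalues onto itself: each of
them is the image of a multiple of itself, and the kernel is the `0`-eigenspace, which is
independent of the other eigenspaces.

For `b ∈ B` of degree `(k, -k)` and `a` of degree `(m + n, -m)` the star product only introduces the
phase `e^{πiθkn}`, because `k(-m) - (-k)(m + n) = kn`. As `b a` has degree
`((k + m) + n, -(k + m))`, `B`-linearity of `L_V` is the exponential law
`e^{πiθ(k+m)n} = e^{πiθkn} e^{πiθmn}`. Naturality holds because `id ⊗ f` preserves the pair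
`(m, n)`.
-/

open scoped TensorProduct
noncomputable section

/-- The phase factor `e^{πiθmn}`. -/
def lphase (θ : ℝ) (m n : ℤ) : ℂ :=
  Complex.exp (Complex.I * ((Real.pi * θ : ℝ) : ℂ) * ((m * n : ℤ) : ℂ))

/-- The vector space underlying the associated module `E_A(V) = ⊕ₙ A⁽ⁿ⁾ ⊗ Vⁿ`,
realized inside `A ⊗[ℂ] V` as the span of the matched homogeneous simple tensors. -/
def assocModule {A : Type} [CommRing A] [Algebra ℂ A]
    (𝒜 : ℤ × ℤ → Submodule ℂ A)
    {V : Type} [AddCommGroup V] [Module ℂ V] (𝒱 : ℤ → Submodule ℂ V) :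
    Submodule ℂ (A ⊗[ℂ] V) :=
  Submodule.span ℂ
    {x : A ⊗[ℂ] V | ∃ (m n : ℤ) (a : A) (v : V),
      a ∈ 𝒜 (m + n, -m) ∧ v ∈ 𝒱 n ∧ x = a ⊗ₜ[ℂ] v}

section SpanOfEigenvectors

variable {R M : Type*}

theorem map_span_eq_of_forall_unit_smul [Semiring R] [AddCommMonoid M] [Module R M]
    {T : M →ₗ[R] M} {s : Set M} (hs : ∀ x ∈ s, ∃ u : Rˣ, T x = (u : R) • x) :
    (Submodule.span R s).map T = Submodule.span R s := by
  rw [Submodule.map_span]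
  refine le_antisymm (Submodule.span_le.2 ?_) (Submodule.span_le.2 fun x hx ↦ ?_)
  · rintro _ ⟨x, hx, rfl⟩
    obtain ⟨u, hu⟩ := hs x hx
    exact hu ▸ Submodule.smul_mem _ _ (Submodule.subset_span hx)
  · obtain ⟨u, hu⟩ := hs x hx
    have eq_inv_smul : x = (↑u⁻¹ : R) • T x := by rw [hu, smul_smul, u.inv_mul, one_smul]
    rw [eq_inv_smul]
    exact Submodule.smul_mem _ _ (Submodule.subset_span ⟨x, hx, rfl⟩)

theorem injOn_span_of_forall_ne_zero_smul [CommRing R] [IsDomain R] [AddCommGroup M] [Module R M]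
    [Module.IsTorsionFree R M] {T : M →ₗ[R] M} {s : Set M}
    (hs : ∀ x ∈ s, ∃ μ : R, μ ≠ 0 ∧ T x = μ • x) :
    Set.InjOn T (Submodule.span R s) := by
  have span_le : Submodule.span R s ≤ ⨆ (μ : R) (_ : μ ≠ 0), Module.End.eigenspace T μ := by
    refine Submodule.span_le.2 fun x hx ↦ ?_
    obtain ⟨μ, hμ, hTx⟩ := hs x hx
    exact Submodule.mem_iSup_of_mem μ <| Submodule.mem_iSup_of_mem hμ <|
      Module.End.mem_eigenspace_iff.2 hTx
  have disjoint_ker : Disjoint (Submodule.span R s) (LinearMap.ker T) := by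
    rw [← Module.End.eigenspace_zero]
    exact ((Module.End.eigenspaces_iSupIndep T 0).mono_right span_le).symm
  exact LinearMap.injOn_of_disjoint_ker subset_rfl disjoint_ker

theorem bijOn_span_of_forall_ne_zero_smul [Field R] [AddCommGroup M] [Module R M]
    {T : M →ₗ[R] M} {s : Set M} (hs : ∀ x ∈ s, ∃ μ : R, μ ≠ 0 ∧ T x = μ • x) :
    Set.BijOn T (Submodule.span R s) (Submodule.span R s) := by
  have map_span : (Submodule.span R s).map T = Submodule.span R s :=
    map_span_eq_of_forall_unit_smul fun x hx ↦
      let ⟨μ, hμ, hTx⟩ := hs x hx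
      ⟨Units.mk0 μ hμ, hTx⟩
  have bijOn_map : Set.BijOn T (Submodule.span R s) ((Submodule.span R s).map T) :=
    (injOn_span_of_forall_ne_zero_smul hs).bijOn_image
  rwa [map_span] at bijOn_map

end SpanOfEigenvectors

theorem lphase_ne_zero (θ : ℝ) (m n : ℤ) : lphase θ m n ≠ 0 :=
  Complex.exp_ne_zero _

theorem lphase_add_left (θ : ℝ) (k m n : ℤ) :
    lphase θ (k + m) n = lphase θ k n * lphase θ m n := by
  simp only [lphase, ← Complex.exp_add]
  congr 1
  push_cast
  ring

theorem phase_neg_eq_lphase (θ : ℝ) (k m n : ℤ) :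
    phase θ (k, -k) (m + n, -m) = lphase θ k n := by
  simp only [phase, lphase]
  congr 3
  ring

section AssociatedModule

variable {A : Type} [CommRing A] [Algebra ℂ A] {𝒜 : ℤ × ℤ → Submodule ℂ A}
  {V : Type} [AddCommGroup V] [Module ℂ V] {𝒱 : ℤ → Submodule ℂ V}
  {W : Type} [AddCommGroup W] [Module ℂ W] {𝒲 : ℤ → Submodule ℂ W}
  {M : Type*} [AddCommMonoid M] [Module ℂ M]

theorem eqOn_totalDeg {n : ℤ} {f g : A →ₗ[ℂ] M}
    (h : ∀ p : ℤ × ℤ, p.1 + p.2 = n → Set.EqOn f g (𝒜 p)) :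
    Set.EqOn f g (totalDeg 𝒜 n) :=
  LinearMap.le_eqLocus.1 <| iSup₂_le fun p hp ↦ LinearMap.le_eqLocus.2 (h p hp)

theorem eqOn_assocModule {f g : A ⊗[ℂ] V →ₗ[ℂ] M}
    (h : ∀ (m n : ℤ) (a : A) (v : V), a ∈ 𝒜 (m + n, -m) → v ∈ 𝒱 n →
      f (a ⊗ₜ[ℂ] v) = g (a ⊗ₜ[ℂ] v)) :
    Set.EqOn f g (assocModule 𝒜 𝒱) := by
  refine LinearMap.eqOn_span' ?_
  rintro _ ⟨m, n, a, v, ha, hv, rfl⟩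
  exact h m n a v ha hv

/-- `stp` is the Connes–Landi star product `⋆_θ` of the graded algebra `𝒜`; being bilinear, it is
prescribed on homogeneous elements only. -/
def IsStarProduct (θ : ℝ) (𝒜 : ℤ × ℤ → Submodule ℂ A) (stp : A →ₗ[ℂ] A →ₗ[ℂ] A) : Prop :=
  ∀ p q : ℤ × ℤ, ∀ a ∈ 𝒜 p, ∀ a' ∈ 𝒜 q, stp a a' = phase θ p q • (a * a')

/-- `L` restricts to the twist `L_V : E_A(V) → E_{A_θ}(V)`. It is encoded as an endomorphism of the
whole of `A ⊗ V`, arbitrary outside `assocModule 𝒜 𝒱`. -/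
def IsAssocTwist (θ : ℝ) (𝒜 : ℤ × ℤ → Submodule ℂ A) (𝒱 : ℤ → Submodule ℂ V)
    (L : A ⊗[ℂ] V →ₗ[ℂ] A ⊗[ℂ] V) : Prop :=
  ∀ (m n : ℤ) (a : A) (v : V), a ∈ 𝒜 (m + n, -m) → v ∈ 𝒱 n →
    L (a ⊗ₜ[ℂ] v) = lphase θ m n • (a ⊗ₜ[ℂ] v)

variable {θ : ℝ} {stp : A →ₗ[ℂ] A →ₗ[ℂ] A} {L : A ⊗[ℂ] V →ₗ[ℂ] A ⊗[ℂ] V}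

theorem IsStarProduct.apply_eq_lphase_smul_mul (hstp : IsStarProduct θ 𝒜 stp) {k m n : ℤ} {b a : A}
    (hb : b ∈ 𝒜 (k, -k)) (ha : a ∈ 𝒜 (m + n, -m)) :
    stp b a = lphase θ k n • (b * a) := by
  rw [hstp _ _ b hb a ha, phase_neg_eq_lphase]

namespace IsAssocTwist

theorem bijOn (hL : IsAssocTwist θ 𝒜 𝒱 L) :
    Set.BijOn L (assocModule 𝒜 𝒱) (assocModule 𝒜 𝒱) := by
  refine bijOn_span_of_forall_ne_zero_smul ?_
  rintro _ ⟨m, n, a, v, ha, hv, rfl⟩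
  exact ⟨lphase θ m n, lphase_ne_zero θ m n, hL m n a v ha hv⟩

theorem apply_mul_tmul [SetLike.GradedMul 𝒜] (hL : IsAssocTwist θ 𝒜 𝒱 L) {k m n : ℤ}
    {b a : A} {v : V} (hb : b ∈ 𝒜 (k, -k)) (ha : a ∈ 𝒜 (m + n, -m)) (hv : v ∈ 𝒱 n) :
    L ((b * a) ⊗ₜ[ℂ] v) = lphase θ (k + m) n • ((b * a) ⊗ₜ[ℂ] v) := by
  have hba : b * a ∈ 𝒜 ((k + m) + n, -(k + m)) := by
    have degree_add : ((k, -k) : ℤ × ℤ) + (m + n, -m) = ((k + m) + n, -(k + m)) := by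
      ext <;> simp only [Prod.fst_add, Prod.snd_add] <;> ring
    exact degree_add ▸ SetLike.GradedMul.mul_mem hb ha
  exact hL (k + m) n (b * a) v hba hv

theorem apply_rTensor_mulLeft_of_homogeneous [SetLike.GradedMul 𝒜] (hL : IsAssocTwist θ 𝒜 𝒱 L)
    (hstp : IsStarProduct θ 𝒜 stp) {k : ℤ} {b : A} (hb : b ∈ 𝒜 (k, -k))
    {ξ : A ⊗[ℂ] V} (hξ : ξ ∈ assocModule 𝒜 𝒱) :
    L ((LinearMap.mulLeft ℂ b).rTensor V ξ) = (stp b).rTensor V (L ξ) := by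
  refine eqOn_assocModule (f := L ∘ₗ (LinearMap.mulLeft ℂ b).rTensor V)
    (g := (stp b).rTensor V ∘ₗ L) (fun m n a v ha hv ↦ ?_) hξ
  calc L ((b * a) ⊗ₜ[ℂ] v)
      = lphase θ (k + m) n • ((b * a) ⊗ₜ[ℂ] v) := hL.apply_mul_tmul hb ha hv
    _ = lphase θ m n • ((lphase θ k n • (b * a)) ⊗ₜ[ℂ] v) := by
        rw [lphase_add_left, mul_comm, mul_smul, TensorProduct.smul_tmul']
    _ = lphase θ m n • (stp b a ⊗ₜ[ℂ] v) := by rw [hstp.apply_eq_lphase_smul_mul hb ha]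
    _ = (stp b).rTensor V (L (a ⊗ₜ[ℂ] v)) := by
        rw [hL m n a v ha hv, map_smul, LinearMap.rTensor_tmul]

theorem apply_rTensor_mulLeft [SetLike.GradedMul 𝒜] (hL : IsAssocTwist θ 𝒜 𝒱 L)
    (hstp : IsStarProduct θ 𝒜 stp) {b : A} (hb : b ∈ totalDeg 𝒜 0)
    {ξ : A ⊗[ℂ] V} (hξ : ξ ∈ assocModule 𝒜 𝒱) :
    L ((LinearMap.mulLeft ℂ b).rTensor V ξ) = (stp b).rTensor V (L ξ) := by
  refine eqOn_totalDeg (f := L ∘ₗ (LinearMap.rTensorHom V ∘ₗ LinearMap.mul ℂ A).flip ξ)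
    (g := (LinearMap.rTensorHom V ∘ₗ stp).flip (L ξ)) ?_ hb
  rintro ⟨k, l⟩ hkl c hc
  obtain rfl : l = -k := (neg_eq_of_add_eq_zero_right hkl).symm
  exact hL.apply_rTensor_mulLeft_of_homogeneous hstp hc hξ

theorem apply_lTensor (hL : IsAssocTwist θ 𝒜 𝒱 L) {L' : A ⊗[ℂ] W →ₗ[ℂ] A ⊗[ℂ] W}
    (hL' : IsAssocTwist θ 𝒜 𝒲 L') {f : V →ₗ[ℂ] W} (hf : ∀ n : ℤ, ∀ v ∈ 𝒱 n, f v ∈ 𝒲 n)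
    {ξ : A ⊗[ℂ] V} (hξ : ξ ∈ assocModule 𝒜 𝒱) :
    L' (f.lTensor A ξ) = f.lTensor A (L ξ) := by
  refine eqOn_assocModule (f := L' ∘ₗ f.lTensor A) (g := f.lTensor A ∘ₗ L)
    (fun m n a v ha hv ↦ ?_) hξ
  rw [LinearMap.comp_apply, LinearMap.comp_apply, LinearMap.lTensor_tmul, hL m n a v ha hv,
    hL' m n a (f v) ha (hf n v hv), map_smul, LinearMap.lTensor_tmul]

end IsAssocTwist

end AssociatedModule

theorem associated_module_functors_naturally_isomorphic_general
    {A : Type} [CommRing A] [Algebra ℂ A] {𝒜 : ℤ × ℤ → Submodule ℂ A} [SetLike.GradedMul 𝒜]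
    {θ : ℝ} {stp : A →ₗ[ℂ] A →ₗ[ℂ] A} (hstp : IsStarProduct θ 𝒜 stp)
    {V : Type} [AddCommGroup V] [Module ℂ V] {𝒱 : ℤ → Submodule ℂ V}
    {L : A ⊗[ℂ] V →ₗ[ℂ] A ⊗[ℂ] V} (hL : IsAssocTwist θ 𝒜 𝒱 L) :
    Set.BijOn L (assocModule 𝒜 𝒱) (assocModule 𝒜 𝒱) ∧
    (∀ b ∈ totalDeg 𝒜 0, ∀ ξ ∈ assocModule 𝒜 𝒱,
      L (TensorProduct.map (LinearMap.mulLeft ℂ b) LinearMap.id ξ)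
        = TensorProduct.map (stp b) LinearMap.id (L ξ)) ∧
    (∀ (W : Type) [AddCommGroup W] [Module ℂ W] (𝒲 : ℤ → Submodule ℂ W) (f : V →ₗ[ℂ] W),
      (∀ n : ℤ, ∀ v ∈ 𝒱 n, f v ∈ 𝒲 n) →
      ∀ L' : A ⊗[ℂ] W →ₗ[ℂ] A ⊗[ℂ] W, IsAssocTwist θ 𝒜 𝒲 L' →
        ∀ ξ ∈ assocModule 𝒜 𝒱,
          L' (TensorProduct.map LinearMap.id f ξ)
            = TensorProduct.map LinearMap.id f (L ξ)) :=
  ⟨hL.bijOn,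
    fun _ hb _ hξ ↦ hL.apply_rTensor_mulLeft hstp hb hξ,
    fun _ _ _ _ _ hf _ hL' _ hξ ↦ hL.apply_lTensor hL' hf hξ⟩

/-- for every `ℤ`-graded `ℂ`-vector space `V`, the linear map
`L_V : E_A(V) → E_{A_θ}(V)` given on `a ⊗ v` with `a` homogeneous of degree
`(m+n,−m)` and `v ∈ Vⁿ` by multiplication with `e^{πiθmn}` is an isomorphism of left
`B`-modules (target carrying the `⋆_θ`-action), and `L` is natural in `V`. -/
theorem associated_module_functors_naturally_isomorphic
    (A : Type) [CommRing A] [Algebra ℂ A]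
    (𝒜 : ℤ × ℤ → Submodule ℂ A) [GradedAlgebra 𝒜]
    (z1 z2 z1s z2s : A)
    (hz1 : z1 ∈ 𝒜 (1, 0)) (hz2 : z2 ∈ 𝒜 (0, 1))
    (hz1s : z1s ∈ 𝒜 (-1, 0)) (hz2s : z2s ∈ 𝒜 (0, -1))
    (hrel : z1s * z1 + z2s * z2 = 1)
    (huniv : ∀ (C : Type) [CommRing C] [Algebra ℂ C] (w1 w2 w1s w2s : C),
      w1s * w1 + w2s * w2 = 1 →
      ∃! f : A →ₐ[ℂ] C, f z1 = w1 ∧ f z2 = w2 ∧ f z1s = w1s ∧ f z2s = w2s)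
    (θ : ℝ)
    (stp : A →ₗ[ℂ] A →ₗ[ℂ] A)
    (hstp : ∀ (p q : ℤ × ℤ), ∀ a ∈ 𝒜 p, ∀ a' ∈ 𝒜 q, stp a a' = phase θ p q • (a * a'))
    (V : Type) [AddCommGroup V] [Module ℂ V]
    (𝒱 : ℤ → Submodule ℂ V) [DirectSum.Decomposition 𝒱]
    (L : A ⊗[ℂ] V →ₗ[ℂ] A ⊗[ℂ] V)
    (hL : ∀ (m n : ℤ) (a : A) (v : V), a ∈ 𝒜 (m + n, -m) → v ∈ 𝒱 n →
      L (a ⊗ₜ[ℂ] v) = lphase θ m n • (a ⊗ₜ[ℂ] v)) :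
    -- `L_V` is a bijection of the underlying space `E_A(V) = E_{A_θ}(V)` onto itself
    Set.BijOn L (assocModule 𝒜 𝒱) (assocModule 𝒜 𝒱) ∧
    -- `L_V` intertwines the classical and the deformed left `B`-actions
    (∀ b ∈ totalDeg 𝒜 0, ∀ ξ ∈ assocModule 𝒜 𝒱,
      L (TensorProduct.map (LinearMap.mulLeft ℂ b) LinearMap.id ξ)
        = TensorProduct.map (stp b) LinearMap.id (L ξ)) ∧
    -- naturality of `L` in `V`
    (∀ (W : Type) [AddCommGroup W] [Module ℂ W]
      (𝒲 : ℤ → Submodule ℂ W) [DirectSum.Decomposition 𝒲]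
      (f : V →ₗ[ℂ] W), (∀ n : ℤ, ∀ v ∈ 𝒱 n, f v ∈ 𝒲 n) →
      ∀ (L' : A ⊗[ℂ] W →ₗ[ℂ] A ⊗[ℂ] W),
        (∀ (m n : ℤ) (a : A) (w : W), a ∈ 𝒜 (m + n, -m) → w ∈ 𝒲 n →
          L' (a ⊗ₜ[ℂ] w) = lphase θ m n • (a ⊗ₜ[ℂ] w)) →
        ∀ ξ ∈ assocModule 𝒜 𝒱,
          L' (TensorProduct.map LinearMap.id f ξ)
            = TensorProduct.map LinearMap.id f (L ξ)) := by
  have h := associated_module_functors_naturally_isomorphic_general hstp hL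
  exact ⟨h.1, h.2.1, fun W _ _ 𝒲 _ ↦ h.2.2 W 𝒲⟩
end
end

section
/- The map φ_θ is bijective and satisfies μ_{A_θ} = μ_A ∘ φ_θ; consequently it restricts to a linear bijection Γ¹(A_θ) → Γ¹(A). This restriction satisfies ver ∘ φ_θ = ver_θ, where ver(a⊗a') := Σₙ (a · a'⁽ⁿ⁾) ⊗ tⁿ ∈ A ⊗ ℂ[t,t⁻¹] and ver_θ(a⊗a') := Σₙ (a ⋆_θ a'⁽ⁿ⁾) ⊗ tⁿ (a'⁽ⁿ⁾ being the total-degree-n component of a'), and φ_θ maps the A_θ-sub-bimodule of Γ¹(A_θ) generated by Γ¹(B) := ker(μ_B : B⊗B → B) (with bimodule actions a·(x⊗y)·a' := (a ⋆_θ x)⊗(y ⋆_θ a')) bijectively onto the A-sub-bimodule of Γ¹(A) generated by Γ¹(B) (with the undeformed actions). Hence the universal Atiyah sequences of the classical and deformed Hopf fibrations are isomorphic. -/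
/-!
Every map involved is determined by its values on tensors of `ℤ²`-homogeneous elements, on which
the first four claims are identities of phases; the phases are nonzero, so `φ_θ` is bijective.

For the sub-bimodules, let `σ_χ` be the automorphism of `A` acting on `𝒜 r` by the character value
`χ r`. For `a ∈ 𝒜 p`, `a' ∈ 𝒜 q` and `g ∈ Γ¹(B)`, one has
`φ_θ (a ⋆ g ⋆ a') = phase θ p q • a · (σ_χ ⊗ σ_χ) g · a'` with `χ = phase θ (p - q)`, because the
phase is an alternating bicharacter which is `1` on pairs of degrees of total degree `0`. As
`σ_χ ⊗ σ_χ` maps `Γ¹(B)` onto itself, `φ_θ` carries `a ⋆ Γ¹(B) ⋆ a'` onto `a · Γ¹(B) · a'` for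
homogeneous `a`, `a'`, and these subspaces span the two sub-bimodules.
-/

open scoped TensorProduct
noncomputable section

/-- `Γ¹(B) = ker(μ_B : B ⊗ B → B)`, realized inside `A ⊗ A` as the intersection of the
span of the simple tensors with both factors of total degree `0` with `ker μ_A`. -/
def Gamma1B {A : Type} [CommRing A] [Algebra ℂ A]
    (𝒜 : ℤ × ℤ → Submodule ℂ A) : Submodule ℂ (A ⊗[ℂ] A) :=
  Submodule.span ℂ
      {y : A ⊗[ℂ] A | ∃ b ∈ totalDeg 𝒜 0, ∃ b' ∈ totalDeg 𝒜 0, y = b ⊗ₜ[ℂ] b'} ⊓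
    LinearMap.ker (LinearMap.mul' ℂ A)

section GradedModule

variable {ι κ R M N P : Type*} [DecidableEq ι] [DecidableEq κ] [CommSemiring R]
  [AddCommMonoid M] [Module R M] [AddCommMonoid N] [Module R N] [AddCommMonoid P] [Module R P]
  (ℳ : ι → Submodule R M) [DirectSum.Decomposition ℳ]
  (𝒩 : κ → Submodule R N) [DirectSum.Decomposition 𝒩]

lemma linearMap_ext_homogeneous {f g : M →ₗ[R] P} (h : ∀ i, ∀ a ∈ ℳ i, f a = g a) : f = g :=
  DirectSum.decompose_lhom_ext ℳ fun i => LinearMap.ext fun a => h i a a.2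

lemma tensor_ext_homogeneous {f g : M ⊗[R] N →ₗ[R] P}
    (h : ∀ i j, ∀ a ∈ ℳ i, ∀ b ∈ 𝒩 j, f (a ⊗ₜ b) = g (a ⊗ₜ b)) : f = g :=
  TensorProduct.ext <| linearMap_ext_homogeneous ℳ fun i a ha =>
    linearMap_ext_homogeneous 𝒩 fun j b hb => h i j a ha b hb

/-- The linear map on a graded module which agrees with `F i` on the component of degree `i`. -/
def homogeneousLift (F : ι → M →ₗ[R] P) : M →ₗ[R] P :=
  DirectSum.toModule R ι P (fun i => (F i).domRestrict (ℳ i)) ∘ₗ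
    (DirectSum.decomposeLinearEquiv ℳ).toLinearMap

lemma homogeneousLift_of_mem (F : ι → M →ₗ[R] P) {i : ι} {a : M} (ha : a ∈ ℳ i) :
    homogeneousLift ℳ F a = F i a := by
  lift a to ℳ i using ha
  simp [homogeneousLift, DirectSum.toModule_lof]

/-- The endomorphism of `M ⊗ N` which multiplies `ℳ i ⊗ 𝒩 j` by `c i j`. -/
def tensorScale (c : ι → κ → R) : M ⊗[R] N →ₗ[R] M ⊗[R] N :=
  TensorProduct.lift <| homogeneousLift ℳ fun i =>
    (TensorProduct.mk R M N).compl₂ (homogeneousLift 𝒩 fun j => c i j • LinearMap.id)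

lemma tensorScale_tmul_of_mem (c : ι → κ → R) {i : ι} {j : κ} {a : M} {b : N}
    (ha : a ∈ ℳ i) (hb : b ∈ 𝒩 j) :
    tensorScale ℳ 𝒩 c (a ⊗ₜ b) = c i j • (a ⊗ₜ[R] b) := by
  simp [tensorScale, homogeneousLift_of_mem ℳ _ ha, homogeneousLift_of_mem 𝒩 _ hb]

lemma bijective_of_tmul_homogeneous_eq_smul {φ : M ⊗[R] N →ₗ[R] M ⊗[R] N} {c : ι → κ → R}
    (hc : ∀ i j, IsUnit (c i j))
    (hφ : ∀ i j, ∀ a ∈ ℳ i, ∀ b ∈ 𝒩 j, φ (a ⊗ₜ b) = c i j • (a ⊗ₜ[R] b)) :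
    Function.Bijective φ := by
  choose d hd using fun i j => (hc i j).exists_left_inv
  have hleft : tensorScale ℳ 𝒩 d ∘ₗ φ = LinearMap.id :=
    tensor_ext_homogeneous ℳ 𝒩 fun i j a ha b hb => by
      simp [hφ i j a ha b hb, tensorScale_tmul_of_mem ℳ 𝒩 d ha hb, smul_smul, mul_comm (c i j), hd]
  have hright : φ ∘ₗ tensorScale ℳ 𝒩 d = LinearMap.id :=
    tensor_ext_homogeneous ℳ 𝒩 fun i j a ha b hb => by
      simp [hφ i j a ha b hb, tensorScale_tmul_of_mem ℳ 𝒩 d ha hb, smul_smul, hd]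
  exact Function.bijective_iff_has_inverse.2
    ⟨tensorScale ℳ 𝒩 d, LinearMap.congr_fun hleft, LinearMap.congr_fun hright⟩

end GradedModule

section BimoduleSpan

variable {ι R M : Type*} [CommSemiring R] [AddCommMonoid M] [Module R M]

/-- The outer action `(x ⊗ y) ↦ (a ⋆ x) ⊗ (y ⋆ a')` on `M ⊗ M` of a bilinear product `⋆ = m`, as a
bilinear function of `a` and `a'`. -/
def outerAction (m : M →ₗ[R] M →ₗ[R] M) : M →ₗ[R] M →ₗ[R] M ⊗[R] M →ₗ[R] M ⊗[R] M :=
  (TensorProduct.mapBilinear (RingHom.id R) M M M M).compl₁₂ m m.flip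

lemma outerAction_tmul (m : M →ₗ[R] M →ₗ[R] M) (a a' x y : M) :
    outerAction m a a' (x ⊗ₜ y) = m a x ⊗ₜ m y a' :=
  rfl

/-- The sub-bimodule of `M ⊗ M` generated by `G` for the outer action of the product `m`. -/
def bimoduleSpan (m : M →ₗ[R] M →ₗ[R] M) (G : Submodule R (M ⊗[R] M)) :
    Submodule R (M ⊗[R] M) :=
  Submodule.span R {y | ∃ a a', ∃ g ∈ G, y = outerAction m a a' g}

variable [DecidableEq ι] (ℳ : ι → Submodule R M) [DirectSum.Decomposition ℳ]

lemma bimoduleSpan_eq_iSup_homogeneous (m : M →ₗ[R] M →ₗ[R] M) (G : Submodule R (M ⊗[R] M)) :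
    bimoduleSpan m G =
      ⨆ (i) (j) (a : ℳ i) (a' : ℳ j), G.map (outerAction m (a : M) (a' : M)) := by
  refine le_antisymm (Submodule.span_le.2 ?_) ?_
  · rintro _ ⟨a, a', g, hg, rfl⟩
    rw [SetLike.mem_coe]
    induction a using DirectSum.Decomposition.inductionOn ℳ with
    | zero => simp
    | add a b iha ihb => simpa using add_mem iha ihb
    | @homogeneous i a =>
      induction a' using DirectSum.Decomposition.inductionOn ℳ with
      | zero => simp
      | add b c ihb ihc => simpa using add_mem ihb ihc
      | @homogeneous j a' =>
        exact Submodule.mem_iSup_of_mem i <| Submodule.mem_iSup_of_mem j <|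
          Submodule.mem_iSup_of_mem a <| Submodule.mem_iSup_of_mem a' <|
            Submodule.mem_map_of_mem hg
  · simp only [iSup_le_iff]
    rintro i j a a' _ ⟨g, hg, rfl⟩
    exact Submodule.subset_span ⟨a, a', g, hg, rfl⟩

lemma map_bimoduleSpan_eq_of_homogeneous {m m' : M →ₗ[R] M →ₗ[R] M} {G : Submodule R (M ⊗[R] M)}
    {φ : M ⊗[R] M →ₗ[R] M ⊗[R] M}
    (h : ∀ i j, ∀ a ∈ ℳ i, ∀ a' ∈ ℳ j,
      (G.map (outerAction m a a')).map φ = G.map (outerAction m' a a')) :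
    (bimoduleSpan m G).map φ = bimoduleSpan m' G := by
  simp only [bimoduleSpan_eq_iSup_homogeneous ℳ, Submodule.map_iSup]
  exact iSup_congr fun i => iSup_congr fun j => iSup_congr fun a => iSup_congr fun a' =>
    h i j a a.2 a' a'.2

end BimoduleSpan

section CharacterAction

variable {ι R A : Type*} [DecidableEq ι] [CommSemiring R] [Semiring A] [Algebra R A]

/-- The endomorphism `σ_χ` of a graded algebra which multiplies the component of degree `i` by
the character value `χ i`. -/
def characterAction [AddMonoid ι] (𝒜 : ι → Submodule R A) [GradedAlgebra 𝒜] (χ : AddChar ι R) :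
    A →ₐ[R] A :=
  (DirectSum.toAlgebra R (fun i => 𝒜 i) (fun i => χ i • (𝒜 i).subtype)
    (by simp) (by simp [AddChar.map_add_eq_mul, smul_smul, mul_comm])).comp
    (DirectSum.decomposeAlgEquiv 𝒜 : A →ₐ[R] _)

lemma characterAction_of_mem [AddMonoid ι] (𝒜 : ι → Submodule R A) [GradedAlgebra 𝒜]
    (χ : AddChar ι R) {i : ι} {a : A} (ha : a ∈ 𝒜 i) : characterAction 𝒜 χ a = χ i • a := by
  lift a to 𝒜 i using ha
  simp only [characterAction, AlgHom.comp_apply, AlgEquiv.coe_toAlgHom,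
    DirectSum.decomposeAlgEquiv_apply, DirectSum.decompose_coe]
  exact DirectSum.toModule_lof R (φ := fun j => χ j • (𝒜 j).subtype) i a

lemma characterAction_comp_inv [AddCommGroup ι] (𝒜 : ι → Submodule R A) [GradedAlgebra 𝒜]
    (χ : AddChar ι R) :
    (characterAction 𝒜 χ).comp (characterAction 𝒜 χ⁻¹) = AlgHom.id R A := by
  refine AlgHom.toLinearMap_injective <| linearMap_ext_homogeneous 𝒜 fun i a ha => ?_
  simp [characterAction_of_mem 𝒜 _ ha, smul_smul, ← AddChar.map_add_eq_mul]

end CharacterAction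

section Phase

variable (θ : ℝ)

lemma phase_ne_zero (p q : ℤ × ℤ) : phase θ p q ≠ 0 := Complex.exp_ne_zero _

/-- The phase as a character of its second argument. -/
def phaseChar (p : ℤ × ℤ) : AddChar (ℤ × ℤ) ℂ where
  toFun := phase θ p
  map_zero_eq_one' := by simp [phase]
  map_add_eq_mul' q r := by
    simp only [phase, ← Complex.exp_add, Prod.fst_add, Prod.snd_add]
    congr 1
    push_cast
    ring

lemma phaseChar_apply (p q : ℤ × ℤ) : phaseChar θ p q = phase θ p q := rfl

lemma phase_mul_phase_mul_phase_add {p q r s : ℤ × ℤ} (hr : r.1 + r.2 = 0) (hs : s.1 + s.2 = 0) :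
    phase θ p r * phase θ s q * phase θ (p + r) (s + q)
      = phase θ p q * (phase θ (p - q) r * phase θ (p - q) s) := by
  obtain ⟨r₁, r₂⟩ := r
  obtain ⟨s₁, s₂⟩ := s
  obtain rfl : r₂ = -r₁ := by simpa [add_eq_zero_iff_neg_eq, eq_comm] using hr
  obtain rfl : s₂ = -s₁ := by simpa [add_eq_zero_iff_neg_eq, eq_comm] using hs
  simp only [phase, ← Complex.exp_add, Prod.fst_add, Prod.snd_add, Prod.fst_sub, Prod.snd_sub]
  congr 1
  push_cast
  ring

end Phase

section Gamma1B

lemma eq_on_totalDeg {A : Type} {M : Type*} [AddCommMonoid A] [Module ℂ A] [AddCommMonoid M]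
    [Module ℂ M] (𝒜 : ℤ × ℤ → Submodule ℂ A) {n : ℤ} {f g : A →ₗ[ℂ] M}
    (h : ∀ r : ℤ × ℤ, r.1 + r.2 = n → ∀ a ∈ 𝒜 r, f a = g a) {b : A} (hb : b ∈ totalDeg 𝒜 n) :
    f b = g b :=
  (iSup₂_le h : totalDeg 𝒜 n ≤ LinearMap.eqLocus f g) hb

variable {A : Type} [CommRing A] [Algebra ℂ A] (𝒜 : ℤ × ℤ → Submodule ℂ A)

lemma eq_on_Gamma1B {M : Type*} [AddCommMonoid M] [Module ℂ M] {f g : A ⊗[ℂ] A →ₗ[ℂ] M}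
    (h : ∀ r s : ℤ × ℤ, r.1 + r.2 = 0 → s.1 + s.2 = 0 →
      ∀ a ∈ 𝒜 r, ∀ b ∈ 𝒜 s, f (a ⊗ₜ b) = g (a ⊗ₜ b))
    {x : A ⊗[ℂ] A} (hx : x ∈ Gamma1B 𝒜) : f x = g x := by
  refine LinearMap.eqOn_span ?_ hx.1
  rintro _ ⟨b, hb, b', hb', rfl⟩
  refine eq_on_totalDeg 𝒜 (f := f ∘ₗ (TensorProduct.mk ℂ A A).flip b')
    (g := g ∘ₗ (TensorProduct.mk ℂ A A).flip b') (fun r hr a ha => ?_) hb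
  exact eq_on_totalDeg 𝒜 (f := f ∘ₗ TensorProduct.mk ℂ A A a)
    (g := g ∘ₗ TensorProduct.mk ℂ A A a) (fun s hs a' ha' => h r s hr hs a ha a' ha') hb'

variable [GradedAlgebra 𝒜] (χ : AddChar (ℤ × ℤ) ℂ)

lemma characterAction_mem_totalDeg {n : ℤ} {b : A} (hb : b ∈ totalDeg 𝒜 n) :
    characterAction 𝒜 χ b ∈ totalDeg 𝒜 n := by
  suffices h : totalDeg 𝒜 n ≤ (totalDeg 𝒜 n).comap (characterAction 𝒜 χ).toLinearMap from h hb
  refine iSup₂_le fun r hr a ha => ?_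
  have ha' : a ∈ totalDeg 𝒜 n := Submodule.mem_iSup_of_mem r (Submodule.mem_iSup_of_mem hr ha)
  simpa [characterAction_of_mem 𝒜 χ ha] using Submodule.smul_mem _ (χ r) ha'

/-- The diagonal action `σ_χ ⊗ σ_χ` of a character on `A ⊗ A`. -/
def tensorCharacterAction : A ⊗[ℂ] A →ₗ[ℂ] A ⊗[ℂ] A :=
  TensorProduct.map (characterAction 𝒜 χ).toLinearMap (characterAction 𝒜 χ).toLinearMap

lemma map_tensorCharacterAction_Gamma1B_le :
    (Gamma1B 𝒜).map (tensorCharacterAction 𝒜 χ) ≤ Gamma1B 𝒜 := by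
  refine (Submodule.map_inf_le _).trans (inf_le_inf ?_ ?_)
  · rw [Submodule.map_span_le]
    rintro _ ⟨b, hb, b', hb', rfl⟩
    exact Submodule.subset_span ⟨_, characterAction_mem_totalDeg 𝒜 χ hb, _,
      characterAction_mem_totalDeg 𝒜 χ hb', rfl⟩
  · rw [Submodule.map_le_iff_le_comap, ← LinearMap.ker_comp, tensorCharacterAction,
      ← AlgHom.comp_mul']
    exact LinearMap.ker_le_ker_comp _ _

lemma tensorCharacterAction_comp_inv :
    tensorCharacterAction 𝒜 χ ∘ₗ tensorCharacterAction 𝒜 χ⁻¹ = LinearMap.id := by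
  rw [tensorCharacterAction, tensorCharacterAction, ← TensorProduct.map_comp,
    ← AlgHom.comp_toLinearMap, characterAction_comp_inv, AlgHom.toLinearMap_id,
    TensorProduct.map_id]

lemma map_tensorCharacterAction_Gamma1B :
    (Gamma1B 𝒜).map (tensorCharacterAction 𝒜 χ) = Gamma1B 𝒜 := by
  refine le_antisymm (map_tensorCharacterAction_Gamma1B_le 𝒜 χ) ?_
  calc Gamma1B 𝒜
      = ((Gamma1B 𝒜).map (tensorCharacterAction 𝒜 χ⁻¹)).map (tensorCharacterAction 𝒜 χ) := by
        rw [← Submodule.map_comp, tensorCharacterAction_comp_inv, Submodule.map_id]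
    _ ≤ (Gamma1B 𝒜).map (tensorCharacterAction 𝒜 χ) :=
        Submodule.map_mono (map_tensorCharacterAction_Gamma1B_le 𝒜 χ⁻¹)

end Gamma1B

section StarProduct

variable {A : Type} [CommRing A] [Algebra ℂ A] (𝒜 : ℤ × ℤ → Submodule ℂ A) [GradedAlgebra 𝒜]
  {θ : ℝ} {stp : A →ₗ[ℂ] A →ₗ[ℂ] A}
  (hstp : ∀ p q : ℤ × ℤ, ∀ a ∈ 𝒜 p, ∀ a' ∈ 𝒜 q, stp a a' = phase θ p q • (a * a'))
  {φ : A ⊗[ℂ] A →ₗ[ℂ] A ⊗[ℂ] A}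
  (hφ : ∀ p q : ℤ × ℤ, ∀ a ∈ 𝒜 p, ∀ a' ∈ 𝒜 q, φ (a ⊗ₜ a') = phase θ p q • (a ⊗ₜ[ℂ] a'))

include hstp hφ

lemma lift_star_eq_mul'_comp : TensorProduct.lift stp = LinearMap.mul' ℂ A ∘ₗ φ :=
  tensor_ext_homogeneous 𝒜 𝒜 fun p q a ha b hb => by simp [hstp p q a ha b hb, hφ p q a ha b hb]

lemma map_outerAction_star_of_mem_Gamma1B {p q : ℤ × ℤ} {a a' : A} (ha : a ∈ 𝒜 p) (ha' : a' ∈ 𝒜 q)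
    {g : A ⊗[ℂ] A} (hg : g ∈ Gamma1B 𝒜) :
    φ (outerAction stp a a' g) = phase θ p q •
      outerAction (LinearMap.mul ℂ A) a a' (tensorCharacterAction 𝒜 (phaseChar θ (p - q)) g) := by
  refine eq_on_Gamma1B 𝒜 (f := φ ∘ₗ outerAction stp a a')
    (g := phase θ p q • outerAction (LinearMap.mul ℂ A) a a' ∘ₗ
      tensorCharacterAction 𝒜 (phaseChar θ (p - q))) (fun r s hr hs x hx y hy => ?_) hg
  calc φ (stp a x ⊗ₜ stp y a')
      = (phase θ p r * phase θ s q * phase θ (p + r) (s + q)) • ((a * x) ⊗ₜ[ℂ] (y * a')) := by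
        rw [hstp p r a ha x hx, hstp s q y hy a' ha', TensorProduct.smul_tmul_smul, map_smul,
          hφ _ _ _ (SetLike.mul_mem_graded ha hx) _ (SetLike.mul_mem_graded hy ha'), smul_smul]
    _ = phase θ p q • (phase θ (p - q) r * phase θ (p - q) s) • ((a * x) ⊗ₜ[ℂ] (y * a')) := by
        rw [phase_mul_phase_mul_phase_add θ hr hs, mul_smul]
    _ = phase θ p q • outerAction (LinearMap.mul ℂ A) a a'
          (tensorCharacterAction 𝒜 (phaseChar θ (p - q)) (x ⊗ₜ y)) := by
        simp [tensorCharacterAction, characterAction_of_mem 𝒜 _ hx, characterAction_of_mem 𝒜 _ hy,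
          outerAction_tmul, phaseChar_apply, ← TensorProduct.smul_tmul', smul_smul, mul_comm]

lemma map_bimoduleSpan_star_Gamma1B :
    (bimoduleSpan stp (Gamma1B 𝒜)).map φ = bimoduleSpan (LinearMap.mul ℂ A) (Gamma1B 𝒜) := by
  refine map_bimoduleSpan_eq_of_homogeneous 𝒜 fun p q a ha a' ha' => ?_
  set σ := tensorCharacterAction 𝒜 (phaseChar θ (p - q))
  set T := outerAction (LinearMap.mul ℂ A) a a'
  calc ((Gamma1B 𝒜).map (outerAction stp a a')).map φ
      = (Gamma1B 𝒜).map (phase θ p q • T ∘ₗ σ) := by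
        rw [← Submodule.map_comp]
        exact SetLike.coe_injective <| Set.image_congr fun g hg =>
          map_outerAction_star_of_mem_Gamma1B 𝒜 hstp hφ ha ha' hg
    _ = ((Gamma1B 𝒜).map σ).map T := by
        rw [Submodule.map_smul _ _ _ (phase_ne_zero θ p q), Submodule.map_comp]
    _ = (Gamma1B 𝒜).map T := by rw [map_tensorCharacterAction_Gamma1B]

end StarProduct

theorem universal_atiyah_sequences_isomorphic_general
    (A : Type) [CommRing A] [Algebra ℂ A]
    (𝒜 : ℤ × ℤ → Submodule ℂ A) [GradedAlgebra 𝒜]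
    (θ : ℝ)
    (stp : A →ₗ[ℂ] A →ₗ[ℂ] A)
    (hstp : ∀ (p q : ℤ × ℤ), ∀ a ∈ 𝒜 p, ∀ a' ∈ 𝒜 q, stp a a' = phase θ p q • (a * a'))
    (φ : A ⊗[ℂ] A →ₗ[ℂ] A ⊗[ℂ] A)
    (hφ : ∀ (p q : ℤ × ℤ), ∀ a ∈ 𝒜 p, ∀ a' ∈ 𝒜 q,
      φ (a ⊗ₜ[ℂ] a') = phase θ p q • (a ⊗ₜ[ℂ] a'))
    (ver verθ : A ⊗[ℂ] A →ₗ[ℂ] A ⊗[ℂ] LaurentPolynomial ℂ)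
    (hver : ∀ (p q : ℤ × ℤ), ∀ a ∈ 𝒜 p, ∀ a' ∈ 𝒜 q,
      ver (a ⊗ₜ[ℂ] a') = (a * a') ⊗ₜ[ℂ] LaurentPolynomial.T (q.1 + q.2))
    (hverθ : ∀ (p q : ℤ × ℤ), ∀ a ∈ 𝒜 p, ∀ a' ∈ 𝒜 q,
      verθ (a ⊗ₜ[ℂ] a') = (stp a a') ⊗ₜ[ℂ] LaurentPolynomial.T (q.1 + q.2)) :
    Function.Bijective φ ∧
    TensorProduct.lift stp = (LinearMap.mul' ℂ A).comp φ ∧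
    Submodule.map φ (LinearMap.ker (TensorProduct.lift stp))
      = LinearMap.ker (LinearMap.mul' ℂ A) ∧
    ver.comp φ = verθ ∧
    Submodule.map φ
        (Submodule.span ℂ {y : A ⊗[ℂ] A | ∃ (a a' : A), ∃ g ∈ Gamma1B 𝒜,
          y = TensorProduct.map (stp a) (stp.flip a') g})
      = Submodule.span ℂ {y : A ⊗[ℂ] A | ∃ (a a' : A), ∃ g ∈ Gamma1B 𝒜,
          y = TensorProduct.map (LinearMap.mulLeft ℂ a) (LinearMap.mulRight ℂ a') g} := by
  have hbij : Function.Bijective φ :=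
    bijective_of_tmul_homogeneous_eq_smul 𝒜 𝒜 (fun p q => (phase_ne_zero θ p q).isUnit) hφ
  have hμ := lift_star_eq_mul'_comp 𝒜 hstp hφ
  refine ⟨hbij, hμ, ?_, ?_, map_bimoduleSpan_star_Gamma1B 𝒜 hstp hφ⟩
  · rw [hμ, LinearMap.ker_comp, Submodule.map_comap_eq_of_surjective hbij.2]
  · refine tensor_ext_homogeneous 𝒜 𝒜 fun p q a ha b hb => ?_
    rw [LinearMap.comp_apply, hφ p q a ha b hb, map_smul, hver p q a ha b hb,
      hverθ p q a ha b hb, hstp p q a ha b hb, TensorProduct.smul_tmul']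

/-- `φ_θ` is bijective and satisfies `μ_{A_θ} = μ_A ∘ φ_θ`; consequently it
restricts to a linear bijection `Γ¹(A_θ) → Γ¹(A)`; this restriction satisfies
`ver ∘ φ_θ = ver_θ` (with values in `A ⊗ ℂ[t,t⁻¹]`), and `φ_θ` maps the
`A_θ`-sub-bimodule of `Γ¹(A_θ)` generated by `Γ¹(B)` bijectively onto the
`A`-sub-bimodule of `Γ¹(A)` generated by `Γ¹(B)`. Hence the universal Atiyah sequences
of the classical and deformed Hopf fibrations are isomorphic. -/
theorem universal_atiyah_sequences_isomorphic
    (A : Type) [CommRing A] [Algebra ℂ A]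
    (𝒜 : ℤ × ℤ → Submodule ℂ A) [GradedAlgebra 𝒜]
    (z1 z2 z1s z2s : A)
    (hz1 : z1 ∈ 𝒜 (1, 0)) (hz2 : z2 ∈ 𝒜 (0, 1))
    (hz1s : z1s ∈ 𝒜 (-1, 0)) (hz2s : z2s ∈ 𝒜 (0, -1))
    (hrel : z1s * z1 + z2s * z2 = 1)
    (huniv : ∀ (C : Type) [CommRing C] [Algebra ℂ C] (w1 w2 w1s w2s : C),
      w1s * w1 + w2s * w2 = 1 →
      ∃! f : A →ₐ[ℂ] C, f z1 = w1 ∧ f z2 = w2 ∧ f z1s = w1s ∧ f z2s = w2s)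
    (θ : ℝ)
    (stp : A →ₗ[ℂ] A →ₗ[ℂ] A)
    (hstp : ∀ (p q : ℤ × ℤ), ∀ a ∈ 𝒜 p, ∀ a' ∈ 𝒜 q, stp a a' = phase θ p q • (a * a'))
    -- the cocycle phase map `φ_θ` on `A ⊗ A`
    (φ : A ⊗[ℂ] A →ₗ[ℂ] A ⊗[ℂ] A)
    (hφ : ∀ (p q : ℤ × ℤ), ∀ a ∈ 𝒜 p, ∀ a' ∈ 𝒜 q,
      φ (a ⊗ₜ[ℂ] a') = phase θ p q • (a ⊗ₜ[ℂ] a'))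
    -- the universal vertical lifts, with values in `A ⊗ ℂ[t,t⁻¹]`
    (ver verθ : A ⊗[ℂ] A →ₗ[ℂ] A ⊗[ℂ] LaurentPolynomial ℂ)
    (hver : ∀ (p q : ℤ × ℤ), ∀ a ∈ 𝒜 p, ∀ a' ∈ 𝒜 q,
      ver (a ⊗ₜ[ℂ] a') = (a * a') ⊗ₜ[ℂ] LaurentPolynomial.T (q.1 + q.2))
    (hverθ : ∀ (p q : ℤ × ℤ), ∀ a ∈ 𝒜 p, ∀ a' ∈ 𝒜 q,
      verθ (a ⊗ₜ[ℂ] a') = (stp a a') ⊗ₜ[ℂ] LaurentPolynomial.T (q.1 + q.2)) :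
    -- `φ_θ` is bijective
    Function.Bijective φ ∧
    -- `μ_{A_θ} = μ_A ∘ φ_θ`
    TensorProduct.lift stp = (LinearMap.mul' ℂ A).comp φ ∧
    -- `φ_θ` maps `Γ¹(A_θ)` bijectively onto `Γ¹(A)`
    Submodule.map φ (LinearMap.ker (TensorProduct.lift stp))
      = LinearMap.ker (LinearMap.mul' ℂ A) ∧
    -- `ver ∘ φ_θ = ver_θ`
    ver.comp φ = verθ ∧
    -- `φ_θ` maps the deformed sub-bimodule generated by `Γ¹(B)` onto the classical one
    Submodule.map φ
        (Submodule.span ℂ {y : A ⊗[ℂ] A | ∃ (a a' : A), ∃ g ∈ Gamma1B 𝒜,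
          y = TensorProduct.map (stp a) (stp.flip a') g})
      = Submodule.span ℂ {y : A ⊗[ℂ] A | ∃ (a a' : A), ∃ g ∈ Gamma1B 𝒜,
          y = TensorProduct.map (LinearMap.mulLeft ℂ a) (LinearMap.mulRight ℂ a') g} := by
  exact universal_atiyah_sequences_isomorphic_general A 𝒜 θ stp hstp φ hφ ver verθ hver hverθ
end
end
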